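/- The core inverse limit X′ of a tent map satisfies F = E (every folding point is an endpoint) if and only if the critical point c is persistently recurrent. -/

import Mathlib

open Set Filter Topology

/-- The inverse limit `lim←(K, T)`, as the space of backward orbits. -/
abbrev InvLim (T : ℝ → ℝ) (K : Set ℝ) :=
  {x : ℕ → ℝ // (∀ n, x n ∈ K) ∧ ∀ n, T (x (n + 1)) = x n}

/-- A point `x` is an endpoint if for any two subcontinua `A`, `B` containing `x`,
either `A ⊆ B` or `B ⊆ A`. -/
def IsEndpointPt {Z : Type*} [TopologicalSpace Z] (x : Z) : Prop :=
  ∀ A B : Set Z, IsCompact A → IsConnected A → IsCompact B → IsConnected B →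
    x ∈ A → x ∈ B → A ⊆ B ∨ B ⊆ A

/-- The ω-limit set of `c` under `T`. -/
def omegaSet (T : ℝ → ℝ) (c : ℝ) : Set ℝ :=
  {y | ∃ φ : ℕ → ℕ, StrictMono φ ∧
    Filter.Tendsto (fun n => T^[φ n] c) Filter.atTop (nhds y)}

/-- The critical point `c` of `T` is reluctantly recurrent if there is `ε > 0` and
arbitrarily long finite backward orbits `(y L, …, y 1, y 0)` in `ω(c)` along which the
`ε`-neighbourhood of `y 0` has a monotone pull-back: `J 0` is that neighbourhood, each
`J (k+1)` is the largest interval containing `y (k+1)` with `T(J (k+1)) ⊆ J k`, and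
`c ∉ (J k)°` for `1 ≤ k ≤ L`.  Otherwise `c` is persistently recurrent. -/
def ReluctantlyRecurrent (T : ℝ → ℝ) (c : ℝ) : Prop :=
  ∃ ε > (0:ℝ), ∀ L : ℕ, ∃ (y : ℕ → ℝ) (J : ℕ → Set ℝ),
    (∀ i ≤ L, y i ∈ omegaSet T c) ∧ (∀ i < L, T (y (i + 1)) = y i) ∧
    J 0 = Set.Ioo (y 0 - ε) (y 0 + ε) ∧
    (∀ k < L, (J (k + 1)).OrdConnected ∧ y (k + 1) ∈ J (k + 1) ∧
      T '' J (k + 1) ⊆ J k ∧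
      ∀ I : Set ℝ, I.OrdConnected → y (k + 1) ∈ I → T '' I ⊆ J k → I ⊆ J (k + 1)) ∧
    (∀ k, 1 ≤ k → k ≤ L → c ∉ interior (J k))

/-! As long as the pull-backs of the `ε`-neighbourhood of `y₀` along a backward orbit `y` are
monotone, they are the balls of radius `ε / s ^ k` about `y_k`; so all of them are monotone iff no
`y_k` with `k ≥ 1` is within `ε / s ^ k` of `c`. This happens for some `ε` and some tail of `x ∈ X′`
iff `x` is not an endpoint:

* If it does, the inverse branches followed by `x` embed an arc in `X′` with `x` in its interior.
* If `x` is not an endpoint, take subcontinua `A`, `B` through `x` with `a ∈ A \ B`, `b ∈ B \ A`,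
  and a coordinate from which on `a` is separated from `B` and `b` from `A`. Were `x` to pass too
  close to `c`, its next image would be so close to the maximum `c₁` that both `a` and `b` lie below
  it there; the larger of the two would then be covered by the projection of the subcontinuum
  joining the smaller one to `x`.

Hence some folding point is not an endpoint iff some backward orbit in `ω(c)` has a monotone
pull-back forever, which by compactness of `ω(c)` is reluctant recurrence. An endpoint is always a
folding point, since each of its coordinates is approximated by points of the orbit of `c`.
-/

open Metric

section EndpointPt

variable {Z W : Type*} [TopologicalSpace Z] [TopologicalSpace W]

lemma IsEndpointPt.of_map {f : Z → W} (hf : Continuous f) (hinj : Function.Injective f) {z : Z}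
    (hz : IsEndpointPt (f z)) : IsEndpointPt z := by
  intro A B hAc hA hBc hB hzA hzB
  simpa only [image_subset_image_iff hinj] using
    hz (f '' A) (f '' B) (hAc.image hf) (hA.image f hf.continuousOn) (hBc.image hf)
      (hB.image f hf.continuousOn) (mem_image_of_mem f hzA) (mem_image_of_mem f hzB)

lemma not_isEndpointPt_Icc {a b : ℝ} {t : Icc a b} (hat : a < t) (htb : t < b) :
    ¬ IsEndpointPt t := by
  have hIic : IsConnected (Iic t) := by
    refine ⟨nonempty_Iic, IsInducing.subtypeVal.isPreconnected_image.1 ?_⟩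
    have : Subtype.val '' Iic t = Icc a (t : ℝ) := by
      ext u
      exact ⟨by rintro ⟨v, hv, rfl⟩; exact ⟨v.2.1, hv⟩,
        fun hu => ⟨⟨u, hu.1, hu.2.trans t.2.2⟩, hu.2, rfl⟩⟩
    exact this ▸ isPreconnected_Icc
  have hIci : IsConnected (Ici t) := by
    refine ⟨nonempty_Ici, IsInducing.subtypeVal.isPreconnected_image.1 ?_⟩
    have : Subtype.val '' Ici t = Icc (t : ℝ) b := by
      ext u
      exact ⟨by rintro ⟨v, hv, rfl⟩; exact ⟨hv, v.2.2⟩,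
        fun hu => ⟨⟨u, t.2.1.trans hu.1, hu.2⟩, hu.1, rfl⟩⟩
    exact this ▸ isPreconnected_Icc
  intro ht
  rcases ht (Iic t) (Ici t) isClosed_Iic.isCompact hIic isClosed_Ici.isCompact hIci
    self_mem_Iic self_mem_Ici with h | h
  · have ha : t ≤ ⟨a, le_rfl, hat.le.trans htb.le⟩ := h (show _ ≤ t from hat.le)
    exact hat.not_ge ha
  · have hb : ⟨b, hat.le.trans htb.le, le_rfl⟩ ≤ t := h (show t ≤ _ from htb.le)
    exact htb.not_ge hb

end EndpointPt

section BackwardOrbit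

/-- A backward orbit `(…, y 2, y 1, y 0)` of `T`, indexed by the number of steps back in time. -/
def IsBackwardOrbit {α : Type*} (T : α → α) (y : ℕ → α) : Prop :=
  ∀ k, T (y (k + 1)) = y k

lemma IsBackwardOrbit.iterate_apply {α : Type*} {T : α → α} {y : ℕ → α}
    (hy : IsBackwardOrbit T y) (n k : ℕ) : T^[k] (y (n + k)) = y n := by
  induction k with
  | zero => rfl
  | succ k ih => rw [Function.iterate_succ_apply, ← add_assoc, hy, ih]

lemma IsBackwardOrbit.drop {α : Type*} {T : α → α} {y : ℕ → α} (hy : IsBackwardOrbit T y)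
    (n : ℕ) : IsBackwardOrbit T fun k => y (n + k) :=
  fun k => hy (n + k)

lemma exists_chain_of_forall_finite {X : Type*} [TopologicalSpace X] {S : Set X}
    (hS : IsCompact S) {R : ℕ → Set (X × X)} (hR : ∀ k, IsClosed (R k))
    (h : ∀ L : ℕ, ∃ y : ℕ → X, (∀ i ≤ L, y i ∈ S) ∧ ∀ k < L, (y k, y (k + 1)) ∈ R k) :
    ∃ y : ℕ → X, (∀ i, y i ∈ S) ∧ ∀ k, (y k, y (k + 1)) ∈ R k := by
  have hclosed : ∀ k, IsClosed {y : ℕ → X | (y k, y (k + 1)) ∈ R k} := fun k =>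
    (hR k).preimage (by fun_prop)
  obtain ⟨y, hyS, hyR⟩ :=
      (isCompact_univ_pi fun _ : ℕ => hS).inter_iInter_nonempty _ hclosed fun u => by
    obtain ⟨y, hyS, hyR⟩ := h (u.sup id + 1)
    refine ⟨fun i => y (min i (u.sup id + 1)), fun i _ => hyS _ (min_le_right _ _),
      mem_iInter₂.2 fun k hk => ?_⟩
    have hkL : k < u.sup id + 1 := Nat.lt_succ_of_le (Finset.le_sup (f := id) hk)
    simpa only [mem_ofPred_eq, min_eq_left hkL.le, min_eq_left (Nat.succ_le_of_lt hkL)]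
      using hyR k hkL
  exact ⟨y, fun i => hyS i (mem_univ i), mem_iInter.1 hyR⟩

end BackwardOrbit

namespace InvLim

variable {T : ℝ → ℝ} {K : Set ℝ}

lemma isBackwardOrbit (x : InvLim T K) : IsBackwardOrbit T x.1 := x.2.2

lemma continuous_eval (k : ℕ) : Continuous fun x : InvLim T K => x.1 k :=
  (continuous_apply k).comp continuous_subtype_val

/-- The shift of the inverse limit by `n` places: it forgets the first `n` coordinates. -/
def drop (n : ℕ) (x : InvLim T K) : InvLim T K :=
  ⟨fun k => x.1 (n + k), fun k => x.2.1 (n + k), x.isBackwardOrbit.drop n⟩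

/-- The `n`-th iterate of the homeomorphism of the inverse limit induced by `T`, inverse to
`InvLim.drop n`. -/
def push (hT : MapsTo T K K) (n : ℕ) (x : InvLim T K) : InvLim T K :=
  ⟨fun k => T^[n] (x.1 k), fun k => hT.iterate n (x.2.1 k), fun k => by
    rw [← Function.iterate_succ_apply' T, Function.iterate_succ_apply, x.2.2]⟩

lemma leftInverse_push_drop (hT : MapsTo T K K) (n : ℕ) :
    Function.LeftInverse (push hT n) (drop n) := by
  intro x
  ext k
  change T^[n] (x.1 (n + k)) = x.1 k
  rw [add_comm, x.isBackwardOrbit.iterate_apply]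

lemma leftInverse_drop_push (hT : MapsTo T K K) (n : ℕ) :
    Function.LeftInverse (drop n) (push hT n) := by
  intro x
  ext k
  change T^[n] (x.1 (n + k)) = x.1 k
  rw [add_comm, x.isBackwardOrbit.iterate_apply]

lemma continuous_push (hT : MapsTo T K K) (hTc : Continuous T) (n : ℕ) :
    Continuous (push hT n) :=
  Continuous.subtype_mk (continuous_pi fun k => (hTc.iterate n).comp (continuous_eval k)) _

lemma isEndpointPt_drop (hT : MapsTo T K K) (hTc : Continuous T) (n : ℕ) {x : InvLim T K}
    (hx : IsEndpointPt x) : IsEndpointPt (drop n x) :=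
  IsEndpointPt.of_map (continuous_push hT hTc n) (leftInverse_drop_push hT n).injective
    ((leftInverse_push_drop hT n x).symm ▸ hx)

lemma ordConnected_image_eval {C : Set (InvLim T K)} (hC : IsPreconnected C) (k : ℕ) :
    ((fun x : InvLim T K => x.1 k) '' C).OrdConnected :=
  (hC.image _ (continuous_eval k).continuousOn).ordConnected

/-- Agreement in coordinate `k` forces agreement in all earlier ones, so a sequence agreeing with
`a` in infinitely many coordinates converges to `a`. -/
lemma eventually_notMem_image_eval {B : Set (InvLim T K)} (hB : IsClosed B) {a : InvLim T K}
    (ha : a ∉ B) : ∀ᶠ k in atTop, a.1 k ∉ (fun x : InvLim T K => x.1 k) '' B := by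
  by_contra hcon
  obtain ⟨φ, hφ, hmem⟩ := extraction_of_frequently_atTop hcon
  choose b hbB hb using hmem
  have hba : Tendsto b atTop (𝓝 a) := by
    refine tendsto_subtype_rng.2 (tendsto_pi_nhds.2 fun i => tendsto_const_nhds.congr' ?_)
    filter_upwards [hφ.tendsto_atTop.eventually_ge_atTop i] with N hN
    obtain ⟨d, hd⟩ := Nat.exists_eq_add_of_le hN
    rw [← a.isBackwardOrbit.iterate_apply i d, ← (b N).isBackwardOrbit.iterate_apply i d, ← hd]
    exact congrArg _ (hb N).symm
  exact ha (hB.mem_of_tendsto hba (Eventually.of_forall hbB))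

end InvLim

section OmegaSet

variable {T : ℝ → ℝ} {c : ℝ}

lemma mem_omegaSet_iff_mapClusterPt {y : ℝ} :
    y ∈ omegaSet T c ↔ MapClusterPt y atTop fun n => T^[n] c :=
  ⟨fun ⟨_, hφ, h⟩ => MapClusterPt.of_comp hφ.tendsto_atTop h.mapClusterPt,
    MapClusterPt.tendsto_subseq⟩

lemma isClosed_omegaSet : IsClosed (omegaSet T c) := by
  have : omegaSet T c = {y | MapClusterPt y atTop fun n => T^[n] c} :=
    Set.ext fun _ => mem_omegaSet_iff_mapClusterPt
  exact this ▸ isClosed_setOfPred_clusterPt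

lemma omegaSet_subset_of_mapsTo {S : Set ℝ} (hS : IsClosed S) (hT : MapsTo T S S) {m : ℕ}
    (hm : T^[m] c ∈ S) : omegaSet T c ⊆ S := by
  rintro y ⟨φ, hφ, h⟩
  refine hS.mem_of_tendsto h ?_
  filter_upwards [hφ.tendsto_atTop.eventually_ge_atTop m] with n hn
  rw [← Nat.sub_add_cancel hn, Function.iterate_add_apply]
  exact hT.iterate _ hm

lemma iterate_mem_omegaSet (hT : Continuous T) (hrec : c ∈ omegaSet T c) (k : ℕ) :
    T^[k] c ∈ omegaSet T c := by
  obtain ⟨φ, hφ, h⟩ := hrec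
  refine ⟨fun n => k + φ n, fun a b hab => Nat.add_lt_add_left (hφ hab) k, ?_⟩
  simpa only [Function.iterate_add_apply, Function.comp_def] using
    ((hT.iterate k).tendsto c).comp h

end OmegaSet

section TentMap

variable {s : ℝ}

/-- The tent map of slope `s`, with critical point `1 / 2`. -/
def tentMap (s x : ℝ) : ℝ := min (s * x) (s * (1 - x))

/-- The core `[c₂, c₁]` of the tent map, where `cₙ` is the `n`-th image of the critical point. -/
def tentCore (s : ℝ) : Set ℝ := Icc ((tentMap s)^[2] (1 / 2)) (tentMap s (1 / 2))

lemma tentMap_eq_mul_sub_abs (hs : 0 ≤ s) (x : ℝ) : tentMap s x = s * (1 / 2 - |x - 1 / 2|) := by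
  rw [tentMap, ← mul_min_of_nonneg _ _ hs]
  rcases le_total x (1 / 2) with h | h
  · rw [min_eq_left (by linarith), abs_of_nonpos (by linarith)]; ring
  · rw [min_eq_right (by linarith), abs_of_nonneg (by linarith)]; ring

lemma tentMap_of_le (hs : 0 ≤ s) {x : ℝ} (hx : x ≤ 1 / 2) : tentMap s x = s * x := by
  rw [tentMap_eq_mul_sub_abs hs, abs_of_nonpos (by linarith)]; ring

lemma tentMap_of_ge (hs : 0 ≤ s) {x : ℝ} (hx : 1 / 2 ≤ x) : tentMap s x = s * (1 - x) := by
  rw [tentMap_eq_mul_sub_abs hs, abs_of_nonneg (by linarith)]; ring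

lemma tentMap_half (hs : 0 ≤ s) : tentMap s (1 / 2) = s / 2 := by
  rw [tentMap_of_le hs le_rfl]; ring

lemma half_sub_tentMap (hs : 0 ≤ s) (x : ℝ) : s / 2 - tentMap s x = s * |x - 1 / 2| := by
  rw [tentMap_eq_mul_sub_abs hs]; ring

lemma tentMap_le (hs : 0 ≤ s) (x : ℝ) : tentMap s x ≤ s / 2 := by
  have := half_sub_tentMap hs x
  have : 0 ≤ s * |x - 1 / 2| := by positivity
  linarith

lemma continuous_tentMap : Continuous (tentMap s) := by
  unfold tentMap; fun_prop

lemma dist_tentMap_le (hs : 0 ≤ s) (x y : ℝ) :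
    dist (tentMap s x) (tentMap s y) ≤ s * dist x y := by
  rw [tentMap_eq_mul_sub_abs hs, tentMap_eq_mul_sub_abs hs, Real.dist_eq, Real.dist_eq, ← mul_sub,
    abs_mul, abs_of_nonneg hs, sub_sub_sub_cancel_left]
  refine mul_le_mul_of_nonneg_left ((abs_abs_sub_abs_le_abs_sub _ _).trans_eq ?_) hs
  rw [sub_sub_sub_cancel_right, abs_sub_comm]

lemma dist_iterate_tentMap_le (hs : 0 ≤ s) (k : ℕ) (x y : ℝ) :
    dist ((tentMap s)^[k] x) ((tentMap s)^[k] y) ≤ s ^ k * dist x y := by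
  have hlip : LipschitzWith s.toNNReal (tentMap s) := LipschitzWith.of_dist_le_mul fun x y => by
    simpa only [Real.coe_toNNReal s hs] using dist_tentMap_le hs x y
  simpa only [NNReal.coe_pow, Real.coe_toNNReal s hs] using (hlip.iterate k).dist_le_mul x y

lemma tentMap_add_of_abs_le (hs : 0 ≤ s) {x u : ℝ} (hu : |u| ≤ |x - 1 / 2|) :
    tentMap s (x + u) = tentMap s x + (if x < 1 / 2 then 1 else -1) * (s * u) := by
  have hu' := abs_le.1 hu
  split_ifs with hx
  · rw [abs_of_neg (by linarith)] at hu'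
    rw [tentMap_of_le hs (by linarith), tentMap_of_le hs hx.le]; ring
  · rw [abs_of_nonneg (by linarith)] at hu'
    rw [tentMap_of_ge hs (by linarith), tentMap_of_ge hs (by linarith)]; ring

lemma tentMap_iterate_two_half (hs : 1 ≤ s) : (tentMap s)^[2] (1 / 2) = s * (1 - s / 2) := by
  change tentMap s (tentMap s (1 / 2)) = _
  rw [tentMap_half (by linarith), tentMap_of_ge (by linarith) (by linarith)]

lemma mem_tentCore (hs : 1 ≤ s) {x : ℝ} : x ∈ tentCore s ↔ s * (1 - s / 2) ≤ x ∧ x ≤ s / 2 := by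
  rw [tentCore, tentMap_iterate_two_half hs, tentMap_half (by linarith), mem_Icc]

lemma mapsTo_tentMap_tentCore (hs1 : 1 ≤ s) (hs2 : s ≤ 2) :
    MapsTo (tentMap s) (tentCore s) (tentCore s) := by
  have hs0 : 0 ≤ s := by linarith
  intro x hx
  rw [mem_tentCore hs1] at hx ⊢
  refine ⟨?_, tentMap_le hs0 x⟩
  rcases le_total x (1 / 2) with h | h
  · rw [tentMap_of_le hs0 h]
    have hc₂ : 0 ≤ s * (1 - s / 2) := mul_nonneg hs0 (by linarith)
    nlinarith
  · rw [tentMap_of_ge hs0 h]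
    exact mul_le_mul_of_nonneg_left (by linarith) hs0

lemma omegaSet_subset_tentCore (hs1 : 1 ≤ s) (hs2 : s ≤ 2) :
    omegaSet (tentMap s) (1 / 2) ⊆ tentCore s := by
  refine omegaSet_subset_of_mapsTo isClosed_Icc (mapsTo_tentMap_tentCore hs1 hs2) (m := 1) ?_
  rw [Function.iterate_one, mem_tentCore hs1, tentMap_half (by linarith)]
  exact ⟨by nlinarith, le_rfl⟩

lemma isCompact_omegaSet_tentMap (hs1 : 1 ≤ s) (hs2 : s ≤ 2) :
    IsCompact (omegaSet (tentMap s) (1 / 2)) :=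
  isCompact_Icc.of_isClosed_subset isClosed_omegaSet (omegaSet_subset_tentCore hs1 hs2)

/-- For `s ≥ 2` the critical orbit is trapped in `(-∞, 0]` from its second step on. -/
lemma lt_two_of_mem_omegaSet (hs : 0 ≤ s) (hrec : 1 / 2 ∈ omegaSet (tentMap s) (1 / 2)) :
    s < 2 := by
  by_contra! hs2
  have hmaps : MapsTo (tentMap s) (Iic 0) (Iic 0) := fun x hx => by
    rw [mem_Iic] at hx ⊢
    rw [tentMap_of_le hs (by linarith)]
    exact mul_nonpos_of_nonneg_of_nonpos hs hx
  have hc₂ : (tentMap s)^[2] (1 / 2) ∈ Iic 0 := by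
    rw [tentMap_iterate_two_half (by linarith)]
    exact mul_nonpos_of_nonneg_of_nonpos hs (by linarith)
  have := mem_Iic.1 (omegaSet_subset_of_mapsTo isClosed_Iic hmaps hc₂ hrec)
  norm_num at this

lemma IsBackwardOrbit.le_half_slope {y : ℕ → ℝ} (hs : 0 ≤ s) (hy : IsBackwardOrbit (tentMap s) y)
    (k : ℕ) : y k ≤ s / 2 :=
  hy k ▸ tentMap_le hs _

lemma IsBackwardOrbit.dist_zero_le {y z : ℕ → ℝ} (hs : 0 ≤ s)
    (hy : IsBackwardOrbit (tentMap s) y) (hz : IsBackwardOrbit (tentMap s) z) (k : ℕ) :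
    dist (y 0) (z 0) ≤ s ^ k * dist (y k) (z k) := by
  simpa only [← hy.iterate_apply 0 k, ← hz.iterate_apply 0 k, zero_add] using
    dist_iterate_tentMap_le hs k (y k) (z k)

lemma IsBackwardOrbit.apply_eq_mul_of_lt {z : ℕ → ℝ} (hs : 0 < s)
    (hz : IsBackwardOrbit (tentMap s) z) {k : ℕ} (hk : z k < s * (1 - s / 2)) :
    z k = s * z (k + 1) := by
  rcases le_total (z (k + 1)) (1 / 2) with h | h
  · rw [← hz k, tentMap_of_le hs.le h]
  · rw [← hz k, tentMap_of_ge hs.le h] at hk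
    have := hz.le_half_slope hs.le (k + 1)
    nlinarith

lemma IsBackwardOrbit.tendsto_zero_of_lt {z : ℕ → ℝ} (hs1 : 1 < s) (hs2 : s ≤ 2)
    (hz : IsBackwardOrbit (tentMap s) z) {m : ℕ} (hm : z m < s * (1 - s / 2)) :
    Tendsto z atTop (𝓝 0) := by
  have hs0 : 0 < s := by linarith
  have hc₂ : 0 ≤ s * (1 - s / 2) := mul_nonneg hs0.le (by linarith)
  have hstep : ∀ j, z (j + m) < s * (1 - s / 2) ∧ z (j + m) = z m * (s ^ j)⁻¹ := by
    intro j
    induction j with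
    | zero => simpa using hm
    | succ j ih =>
      have hdiv : z (j + 1 + m) = z (j + m) * s⁻¹ := by
        rw [hz.apply_eq_mul_of_lt hs0 ih.1, add_right_comm]; field_simp
      refine ⟨?_, by rw [hdiv, ih.2, pow_succ, mul_inv, mul_assoc]⟩
      rw [hdiv, ← div_eq_mul_inv, div_lt_iff₀ hs0]
      nlinarith [ih.1]
  refine (tendsto_add_atTop_iff_nat m).1 ?_
  simpa only [(hstep _).2, mul_zero, Pi.inv_apply] using
    (tendsto_pow_atTop_atTop_of_one_lt hs1).inv_tendsto_atTop.const_mul (z m)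

lemma IsBackwardOrbit.mem_tentCore_of_tendsto {y z : ℕ → ℝ} (hs1 : 1 < s) (hs2 : s < 2)
    (hz : IsBackwardOrbit (tentMap s) z) (hy : ∀ k, y k ∈ tentCore s)
    (hzy : Tendsto (fun k => z k - y k) atTop (𝓝 0)) (m : ℕ) : z m ∈ tentCore s := by
  have hs0 : 0 < s := by linarith
  refine (mem_tentCore hs1.le).2 ⟨?_, hz.le_half_slope hs0.le m⟩
  by_contra! hm
  have hy0 : Tendsto y atTop (𝓝 0) := by
    simpa only [sub_sub_cancel, sub_zero] using (hz.tendsto_zero_of_lt hs1 hs2.le hm).sub hzy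
  have hc₂ : 0 < s * (1 - s / 2) := mul_pos hs0 (by linarith)
  exact hc₂.not_ge (ge_of_tendsto' hy0 fun k => ((mem_tentCore hs1.le).1 (hy k)).1)

end TentMap

section PullBack

variable {s ε : ℝ} {y : ℕ → ℝ}

/-- The `k`-th pull-back, under the tent map, of the `ε`-neighbourhood of `y 0` along the backward
orbit `y`, provided that the first `k` pull-backs are monotone: both branches have slope `±s`. -/
def pullbackBall (s ε : ℝ) (y : ℕ → ℝ) (k : ℕ) : Set ℝ := ball (y k) (ε / s ^ k)

/-- All pull-backs of the `ε`-neighbourhood of `y 0` along `y` are monotone, that is, none of them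
contains the critical point. -/
def HasMonotonePullback (s ε : ℝ) (y : ℕ → ℝ) : Prop := ∀ k, 1 / 2 ∉ pullbackBall s ε y (k + 1)

lemma pullbackBall_zero : pullbackBall s ε y 0 = Ioo (y 0 - ε) (y 0 + ε) := by
  rw [pullbackBall, pow_zero, div_one, Real.ball_eq_Ioo]

lemma mem_pullbackBall_self (hs : 0 < s) (hε : 0 < ε) (k : ℕ) : y k ∈ pullbackBall s ε y k :=
  mem_ball_self (by positivity)

lemma ordConnected_pullbackBall (k : ℕ) : (pullbackBall s ε y k).OrdConnected :=
  (convex_ball _ _).ordConnected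

lemma mul_lt_div_pow_iff (hs : 0 < s) {d : ℝ} {k : ℕ} :
    s * d < ε / s ^ k ↔ d < ε / s ^ (k + 1) := by
  rw [pow_succ, ← div_div, lt_div_iff₀' hs]

lemma image_pullbackBall_subset (hs : 0 < s) {k : ℕ} (hy : tentMap s (y (k + 1)) = y k) :
    tentMap s '' pullbackBall s ε y (k + 1) ⊆ pullbackBall s ε y k := by
  rintro _ ⟨z, hz, rfl⟩
  rw [pullbackBall, mem_ball, ← hy]
  exact (dist_tentMap_le hs.le _ _).trans_lt ((mul_lt_div_pow_iff hs).2 hz)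

/-- From `y (k + 1)` up to the critical point, inclusive, distances expand by exactly `s`: were the
critical point in `I`, it would lie in the ball. So `I` stays on one branch. -/
lemma subset_pullbackBall (hs : 0 < s) {k : ℕ} (hy : tentMap s (y (k + 1)) = y k)
    (hcrit : 1 / 2 ∉ pullbackBall s ε y (k + 1)) {I : Set ℝ} (hI : I.OrdConnected)
    (hyI : y (k + 1) ∈ I) (hIk : tentMap s '' I ⊆ pullbackBall s ε y k) :
    I ⊆ pullbackBall s ε y (k + 1) := by
  have hexpand : ∀ u ∈ I, dist (tentMap s u) (tentMap s (y (k + 1))) = s * dist u (y (k + 1)) →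
      u ∈ pullbackBall s ε y (k + 1) := fun u hu hdist => by
    have := hIk (mem_image_of_mem _ hu)
    rw [pullbackBall, mem_ball, ← hy, hdist] at this
    exact (mul_lt_div_pow_iff hs).1 this
  have hleft : ∀ u ∈ I, u ≤ 1 / 2 → y (k + 1) ≤ 1 / 2 → u ∈ pullbackBall s ε y (k + 1) :=
    fun u hu h₁ h₂ => hexpand u hu <| by
      rw [tentMap_of_le hs.le h₁, tentMap_of_le hs.le h₂, Real.dist_eq, Real.dist_eq, ← mul_sub,
        abs_mul, abs_of_pos hs]
  have hright : ∀ u ∈ I, 1 / 2 ≤ u → 1 / 2 ≤ y (k + 1) → u ∈ pullbackBall s ε y (k + 1) :=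
    fun u hu h₁ h₂ => hexpand u hu <| by
      rw [tentMap_of_ge hs.le h₁, tentMap_of_ge hs.le h₂, Real.dist_eq, Real.dist_eq, ← mul_sub,
        abs_mul, abs_of_pos hs, sub_sub_sub_cancel_left, abs_sub_comm]
  have hcI : 1 / 2 ∉ I := fun hcI => hcrit <|
    (le_total (y (k + 1)) (1 / 2)).elim (hleft _ hcI le_rfl) (hright _ hcI le_rfl)
  intro u hu
  rcases le_total u (1 / 2) with h₁ | h₁ <;> rcases le_total (y (k + 1)) (1 / 2) with h₂ | h₂
  · exact hleft u hu h₁ h₂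
  · exact absurd (hI.out hu hyI ⟨h₁, h₂⟩) hcI
  · exact absurd (hI.out hyI hu ⟨h₂, h₁⟩) hcI
  · exact hright u hu h₁ h₂

lemma pullbackBall_subset_of_maximal (hs : 0 < s) (hε : 0 < ε) {L : ℕ}
    (hy : ∀ k < L, tentMap s (y (k + 1)) = y k) {J : ℕ → Set ℝ}
    (hJ₀ : pullbackBall s ε y 0 ⊆ J 0)
    (hJ : ∀ k < L, ∀ I : Set ℝ, I.OrdConnected → y (k + 1) ∈ I → tentMap s '' I ⊆ J k →
      I ⊆ J (k + 1)) {k : ℕ} (hk : k ≤ L) : pullbackBall s ε y k ⊆ J k := by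
  induction k with
  | zero => exact hJ₀
  | succ k ih =>
    exact hJ k hk _ (ordConnected_pullbackBall _) (mem_pullbackBall_self hs hε _)
      ((image_pullbackBall_subset hs (hy k hk)).trans (ih (Nat.le_of_succ_le hk)))

lemma reluctantlyRecurrent_tentMap_iff_finite (hs : 0 < s) :
    ReluctantlyRecurrent (tentMap s) (1 / 2) ↔ ∃ ε > 0, ∀ L : ℕ, ∃ y : ℕ → ℝ,
      (∀ i ≤ L, y i ∈ omegaSet (tentMap s) (1 / 2)) ∧
      ∀ k < L, tentMap s (y (k + 1)) = y k ∧ 1 / 2 ∉ pullbackBall s ε y (k + 1) := by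
  refine exists_congr fun ε => and_congr_right fun hε => forall_congr' fun L =>
    exists_congr fun y => ?_
  constructor
  · rintro ⟨J, hyω, hy, hJ₀, hJ, hcrit⟩
    refine ⟨hyω, fun k hk => ⟨hy k hk, fun hmem => ?_⟩⟩
    have hsub : pullbackBall s ε y (k + 1) ⊆ J (k + 1) :=
      pullbackBall_subset_of_maximal hs hε hy (hJ₀ ▸ pullbackBall_zero.subset)
        (fun k hk => (hJ k hk).2.2.2) hk
    exact hcrit (k + 1) k.succ_pos hk (interior_maximal hsub isOpen_ball hmem)
  · rintro ⟨hyω, hy⟩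
    refine ⟨pullbackBall s ε y, hyω, fun k hk => (hy k hk).1, pullbackBall_zero, fun k hk =>
      ⟨ordConnected_pullbackBall _, mem_pullbackBall_self hs hε _,
        image_pullbackBall_subset hs (hy k hk).1,
        fun I => subset_pullbackBall hs (hy k hk).1 (hy k hk).2⟩, ?_⟩
    rintro (_ | k) hk hkL hmem
    · exact absurd hk (by norm_num)
    · exact (hy k hkL).2 (interior_subset hmem)

theorem reluctantlyRecurrent_tentMap_iff (hs1 : 1 ≤ s) (hs2 : s ≤ 2) :
    ReluctantlyRecurrent (tentMap s) (1 / 2) ↔ ∃ x : InvLim (tentMap s) (tentCore s),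
      (∀ n, x.1 n ∈ omegaSet (tentMap s) (1 / 2)) ∧ ∃ ε > 0, HasMonotonePullback s ε x.1 := by
  rw [reluctantlyRecurrent_tentMap_iff_finite (by linarith)]
  constructor
  · rintro ⟨ε, hε, h⟩
    have hclosed : ∀ k : ℕ, IsClosed
        {p : ℝ × ℝ | tentMap s p.2 = p.1 ∧ 1 / 2 ∉ ball p.2 (ε / s ^ (k + 1))} := fun k =>
      (isClosed_eq (continuous_tentMap.comp continuous_snd) continuous_fst).inter
        (isOpen_lt (continuous_const.dist continuous_snd) continuous_const).isClosed_compl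
    obtain ⟨y, hyω, hy⟩ :=
      exists_chain_of_forall_finite (isCompact_omegaSet_tentMap hs1 hs2) hclosed h
    exact ⟨⟨y, fun i => omegaSet_subset_tentCore hs1 hs2 (hyω i), fun k => (hy k).1⟩, hyω, ε, hε,
      fun k => (hy k).2⟩
  · rintro ⟨x, hxω, ε, hε, hx⟩
    exact ⟨ε, hε, fun L => ⟨x.1, fun i _ => hxω i, fun k _ => ⟨x.2.2 k, hx k⟩⟩⟩

end PullBack

section Arc

variable {s ε t : ℝ} {y : ℕ → ℝ}

/-- The orientation of the branch of the `k`-th iterate of the tent map along the backward orbit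
`y` from `y k` to `y 0`. -/
noncomputable def branchSign (y : ℕ → ℝ) (k : ℕ) : ℝ :=
  ∏ i ∈ Finset.range k, if y (i + 1) < 1 / 2 then 1 else -1

/-- The `k`-th preimage of `y 0 + t` along the inverse branches followed by the backward orbit
`y`. -/
noncomputable def shadow (s : ℝ) (y : ℕ → ℝ) (t : ℝ) (k : ℕ) : ℝ :=
  y k + branchSign y k * (t / s ^ k)

lemma abs_branchSign (y : ℕ → ℝ) (k : ℕ) : |branchSign y k| = 1 := by
  rw [branchSign, Finset.abs_prod]
  exact Finset.prod_eq_one fun i _ => by split_ifs <;> simp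

lemma shadow_zero_right (s : ℝ) (y : ℕ → ℝ) (t : ℝ) : shadow s y t 0 = y 0 + t := by
  simp [shadow, branchSign]

lemma shadow_zero (s : ℝ) (y : ℕ → ℝ) : shadow s y 0 = y := by
  ext k; simp [shadow]

lemma abs_branchSign_mul_div_pow (hs : 0 < s) (y : ℕ → ℝ) (t : ℝ) (k : ℕ) :
    |branchSign y k * (t / s ^ k)| = |t| / s ^ k := by
  rw [abs_mul, abs_branchSign, one_mul, abs_div, abs_of_pos (pow_pos hs k)]

lemma isBackwardOrbit_shadow (hs : 0 < s) (hy : IsBackwardOrbit (tentMap s) y)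
    (hmono : HasMonotonePullback s ε y) (ht : |t| ≤ ε) :
    IsBackwardOrbit (tentMap s) (shadow s y t) := by
  intro k
  have hshort : |branchSign y (k + 1) * (t / s ^ (k + 1))| ≤ |y (k + 1) - 1 / 2| := by
    have hfar : ε / s ^ (k + 1) ≤ |y (k + 1) - 1 / 2| := by
      simpa only [pullbackBall, mem_ball', Real.dist_eq, not_lt] using hmono k
    rw [abs_branchSign_mul_div_pow hs]
    exact (by gcongr : |t| / s ^ (k + 1) ≤ ε / s ^ (k + 1)).trans hfar
  rw [shadow, shadow, tentMap_add_of_abs_le hs.le hshort, hy k, branchSign,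
    Finset.prod_range_succ, ← branchSign, pow_succ]
  split_ifs <;> field_simp

lemma tendsto_shadow_sub (hs : 1 < s) (y : ℕ → ℝ) (t : ℝ) :
    Tendsto (fun k => shadow s y t k - y k) atTop (𝓝 0) := by
  refine squeeze_zero_norm (fun k => ?_)
    ((tendsto_pow_atTop_atTop_of_one_lt hs).const_div_atTop |t|)
  rw [shadow, add_sub_cancel_left, Real.norm_eq_abs, abs_branchSign_mul_div_pow (by linarith)]

lemma shadow_mem_tentCore (hs1 : 1 < s) (hs2 : s < 2) (x : InvLim (tentMap s) (tentCore s))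
    (hmono : HasMonotonePullback s ε x.1) (ht : |t| ≤ ε) (k : ℕ) :
    shadow s x.1 t k ∈ tentCore s :=
  (isBackwardOrbit_shadow (by linarith) x.isBackwardOrbit hmono ht).mem_tentCore_of_tendsto hs1 hs2
    x.2.1 (tendsto_shadow_sub hs1 x.1 t) k

lemma not_isEndpointPt_of_hasMonotonePullback (hs1 : 1 < s) (hs2 : s < 2)
    (x : InvLim (tentMap s) (tentCore s)) (hε : 0 < ε) (hmono : HasMonotonePullback s ε x.1) :
    ¬ IsEndpointPt x := by
  let arc : Icc (-ε) ε → InvLim (tentMap s) (tentCore s) := fun t =>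
    ⟨shadow s x.1 t, shadow_mem_tentCore hs1 hs2 x hmono (abs_le.2 t.2),
      isBackwardOrbit_shadow (by linarith) x.isBackwardOrbit hmono (abs_le.2 t.2)⟩
  have harc : Continuous arc := by
    refine Continuous.subtype_mk (continuous_pi fun k => ?_) _
    unfold shadow
    fun_prop
  have hinj : Function.Injective arc := fun t u htu => by
    have h₀ : shadow s x.1 t 0 = shadow s x.1 u 0 := congrArg (fun w => w.1 0) htu
    rw [shadow_zero_right, shadow_zero_right] at h₀
    exact Subtype.ext (add_left_cancel h₀)
  have hx : arc ⟨0, by linarith, hε.le⟩ = x := Subtype.ext (shadow_zero s x.1)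
  intro hend
  exact not_isEndpointPt_Icc (neg_lt_zero.2 hε) hε ((hx.symm ▸ hend).of_map harc hinj)

end Arc

section Characterisation

variable {s ε : ℝ}

/-- The point `x (j + 1)` is so close to the critical point that `x j` is nearly the maximal value
`s / 2`, leaving no room above it for an orbit `ε`-distinguishable from `x` at time `0`. -/
lemma IsBackwardOrbit.le_of_half_mem_pullbackBall (hs : 0 < s) {x w : ℕ → ℝ}
    (hx : IsBackwardOrbit (tentMap s) x) (hw : IsBackwardOrbit (tentMap s) w)
    (hxw : ε ≤ dist (w 0) (x 0)) {j : ℕ} (hcrit : 1 / 2 ∈ pullbackBall s ε x (j + 1)) :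
    w j ≤ x j := by
  by_contra! hlt
  have htop : s / 2 - x j < ε / s ^ j := by
    rw [← hx j, half_sub_tentMap hs.le, mul_lt_div_pow_iff hs, ← Real.dist_eq]
    exact mem_ball'.1 hcrit
  have hclose : dist (w j) (x j) < ε / s ^ j := by
    rw [Real.dist_eq, abs_of_pos (sub_pos.2 hlt)]
    linarith [hw.le_half_slope hs.le j]
  rw [lt_div_iff₀' (pow_pos hs j)] at hclose
  exact (hxw.trans (hw.dist_zero_le hs.le hx j)).not_gt hclose

lemma isEndpointPt_of_forall_not_hasMonotonePullback (hs : 0 < s) {K : Set ℝ}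
    {x : InvLim (tentMap s) K}
    (hx : ∀ n, ∀ ε > 0, ¬ HasMonotonePullback s ε (InvLim.drop n x).1) : IsEndpointPt x := by
  intro A B hAc hA hBc hB hxA hxB
  by_contra! hAB
  obtain ⟨a, haA, haB⟩ := not_subset.1 hAB.1
  obtain ⟨b, hbB, hbA⟩ := not_subset.1 hAB.2
  obtain ⟨n, hn⟩ := eventually_atTop.1 <|
    (InvLim.eventually_notMem_image_eval hBc.isClosed haB).and
      (InvLim.eventually_notMem_image_eval hAc.isClosed hbA)
  have hax : a.1 n ≠ x.1 n := fun h => (hn n le_rfl).1 ⟨x, hxB, h.symm⟩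
  have hbx : b.1 n ≠ x.1 n := fun h => (hn n le_rfl).2 ⟨x, hxA, h.symm⟩
  have hε : 0 < min (dist (a.1 n) (x.1 n)) (dist (b.1 n) (x.1 n)) :=
    lt_min (dist_pos.2 hax) (dist_pos.2 hbx)
  obtain ⟨j, hj⟩ := not_forall_not.1 (hx n _ hε)
  have hle : ∀ w : InvLim (tentMap s) K,
      min (dist (a.1 n) (x.1 n)) (dist (b.1 n) (x.1 n)) ≤ dist (w.1 n) (x.1 n) →
      w.1 (n + j) ≤ x.1 (n + j) := fun w hw =>
    (x.isBackwardOrbit.drop n).le_of_half_mem_pullbackBall hs (w.isBackwardOrbit.drop n) hw hj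
  have hnj := hn (n + j) (Nat.le_add_right n j)
  rcases le_total (a.1 (n + j)) (b.1 (n + j)) with hab | hba
  · exact hnj.2 <| (InvLim.ordConnected_image_eval hA.isPreconnected (n + j)).out
      ⟨a, haA, rfl⟩ ⟨x, hxA, rfl⟩ ⟨hab, hle b (min_le_right _ _)⟩
  · exact hnj.1 <| (InvLim.ordConnected_image_eval hB.isPreconnected (n + j)).out
      ⟨b, hbB, rfl⟩ ⟨x, hxB, rfl⟩ ⟨hba, hle a (min_le_left _ _)⟩

theorem isEndpointPt_iff_forall_not_hasMonotonePullback (hs1 : 1 < s) (hs2 : s < 2)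
    (x : InvLim (tentMap s) (tentCore s)) :
    IsEndpointPt x ↔ ∀ n, ∀ ε > 0, ¬ HasMonotonePullback s ε (InvLim.drop n x).1 :=
  ⟨fun hx n _ hε hmono => not_isEndpointPt_of_hasMonotonePullback hs1 hs2 _ hε hmono
      (InvLim.isEndpointPt_drop (mapsTo_tentMap_tentCore hs1.le hs2.le) continuous_tentMap n hx),
    isEndpointPt_of_forall_not_hasMonotonePullback (by linarith)⟩

theorem IsEndpointPt.mem_omegaSet (hs1 : 1 < s) (hs2 : s < 2)
    (hrec : 1 / 2 ∈ omegaSet (tentMap s) (1 / 2)) {x : InvLim (tentMap s) (tentCore s)}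
    (hx : IsEndpointPt x) (n : ℕ) : x.1 n ∈ omegaSet (tentMap s) (1 / 2) := by
  have hs0 : 0 < s := by linarith
  rw [← isClosed_omegaSet.closure_eq, Metric.mem_closure_iff]
  intro ε hε
  obtain ⟨j, hj⟩ := not_forall_not.1 <|
    (isEndpointPt_iff_forall_not_hasMonotonePullback hs1 hs2 x).1 hx n ε hε
  refine ⟨_, iterate_mem_omegaSet continuous_tentMap hrec (j + 1), ?_⟩
  rw [← x.isBackwardOrbit.iterate_apply n (j + 1)]
  refine (dist_iterate_tentMap_le hs0.le _ _ _).trans_lt ?_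
  rw [← lt_div_iff₀' (pow_pos hs0 _)]
  exact mem_ball'.1 hj

end Characterisation

theorem stmt14_general {s : ℝ} (hs : 1 < s) (hrec : 1 / 2 ∈ omegaSet (tentMap s) (1 / 2)) :
    {x : InvLim (tentMap s) (tentCore s) | ∀ n, x.1 n ∈ omegaSet (tentMap s) (1 / 2)} =
      {x | IsEndpointPt x} ↔ ¬ ReluctantlyRecurrent (tentMap s) (1 / 2) := by
  have hs2 : s < 2 := lt_two_of_mem_omegaSet (by linarith) hrec
  have hend := isEndpointPt_iff_forall_not_hasMonotonePullback hs hs2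
  rw [reluctantlyRecurrent_tentMap_iff hs.le hs2.le]
  constructor
  · rintro hFE ⟨x, hxω, ε, hε, hmono⟩
    have hx : IsEndpointPt x := hFE.subset hxω
    exact not_isEndpointPt_of_hasMonotonePullback hs hs2 x hε hmono hx
  · intro hper
    refine Subset.antisymm (fun x hxω => (hend x).2 fun n ε hε hmono => ?_)
      fun x hx n => IsEndpointPt.mem_omegaSet hs hs2 hrec hx n
    exact hper ⟨InvLim.drop n x, fun k => hxω (n + k), ε, hε, hmono⟩

/-- For the core inverse limit `X′` of a tent map with recurrent
critical point of infinite orbit, `F = E` (every folding point is an endpoint) if and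
only if `c` is persistently recurrent. -/
theorem stmt14 (s : ℝ) (hs : s ∈ Set.Ioc (Real.sqrt 2) 2) (T : ℝ → ℝ)
    (hT : ∀ x, T x = min (s * x) (s * (1 - x))) (c : ℝ) (hc : c = 1/2)
    (hinf : Function.Injective fun n : ℕ => T^[n] c)
    (hrec : c ∈ omegaSet T c)
    (K : Set ℝ) (hK : K = Set.Icc (T^[2] c) (T c))
    (E F : Set (InvLim T K))
    (hE : E = {x : InvLim T K | IsEndpointPt x})
    (hF : F = {x : InvLim T K | ∀ n, x.1 n ∈ omegaSet T c}) :
    F = E ↔ ¬ ReluctantlyRecurrent T c := by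
  obtain rfl : T = tentMap s := funext hT
  subst hc hK hE hF
  exact stmt14_general (Real.one_lt_sqrt_two.trans hs.1) hrec
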